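/- Let F = {f_1,…,f_m} be a CPLIFS whose generated self-similar IFS S_F has no exact overlapping. Then for every ε > 0 there exists δ > 0 such that every CPLIFS F̂ = {f̂_1,…,f̂_m} that is δ-close to F satisfies |s_F − s_{F̂}| < ε, where s_F and s_{F̂} denote the natural dimensions of F and F̂. -/

import Mathlib

open Set Filter MeasureTheory

noncomputable section

/-- Composition `f_{i₁} ∘ ⋯ ∘ f_{iₙ}` of a family of maps of `ℝ` along a finite word
(the empty composition being the identity). -/
def compFam {ι : Type*} (S : ι → ℝ → ℝ) (w : List ι) : ℝ → ℝ :=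
  w.foldr (fun k g => S k ∘ g) id

/-- A family of maps of `ℝ` has *no exact overlapping* if for every `n ≥ 1` and all words
`ī, j̄` of length `n`, equality of the compositions `S_ī = S_j̄` (as functions) implies
`ī = j̄`. -/
def NoExactOverlap {ι : Type*} (S : ι → ℝ → ℝ) : Prop :=
  ∀ n : ℕ, 1 ≤ n → ∀ i j : Fin n → ι,
    compFam S (List.ofFn i) = compFam S (List.ofFn j) → i = j

/-- The supporting interval `I` of the system `{f_1, …, f_m}`:  if the maps have a common
fixed point `φ` (i.e. the attractor is the single point `φ`) it is `[φ - 1/2, φ + 1/2]`;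
otherwise it is the smallest nonempty compact interval sent into itself by all the maps,
i.e. the intersection of all such intervals. -/
def suppInt {m : ℕ} (f : Fin m → ℝ → ℝ) : Set ℝ :=
  haveI := Classical.propDecidable (∃ φ : ℝ, ∀ k, f k φ = φ)
  if h : ∃ φ : ℝ, ∀ k, f k φ = φ then
    Set.Icc (h.choose - 1 / 2) (h.choose + 1 / 2)
  else
    ⋂₀ {J : Set ℝ | J.Nonempty ∧ (∃ a b : ℝ, J = Set.Icc a b) ∧ ∀ k, f k '' J ⊆ J}

/-- The natural pressure function
`Φ(s) = limsup_{n → ∞} (1/n) log ∑_{(i₁,…,iₙ)} |I_{i₁…iₙ}|ˢ`,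
where `I_{i₁…iₙ} = f_{i₁} ∘ ⋯ ∘ f_{iₙ} (I)` are the cylinder intervals and `|·|` denotes
the length (diameter) of an interval. -/
def pressure {m : ℕ} (f : Fin m → ℝ → ℝ) (s : ℝ) : ℝ :=
  Filter.limsup
    (fun n : ℕ =>
      (n : ℝ)⁻¹ * Real.log (∑ w : Fin n → Fin m,
        Metric.diam (compFam f (List.ofFn w) '' suppInt f) ^ s))
    Filter.atTop

/-- A continuous piecewise linear iterated function system (CPLIFS) consisting of `m ≥ 2`
continuous piecewise linear maps `f k : ℝ → ℝ`; the map `f k` has the `l k` breaking points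
`b k 0 < … < b k (l k - 1)` and on the `i`-th open interval of linearity determined by them
it coincides with the affine map `x ↦ ρ k i * x + t k i`, where the slopes satisfy
`0 < |ρ k i| < 1` and consecutive slopes of each map are distinct. -/
structure CPLIFS (m : ℕ) (l : Fin m → ℕ) : Type where
  f : Fin m → ℝ → ℝ
  b : (k : Fin m) → Fin (l k) → ℝ
  ρ : (k : Fin m) → Fin (l k + 1) → ℝ
  t : (k : Fin m) → Fin (l k + 1) → ℝ
  hm : 2 ≤ m
  hb : ∀ k, StrictMono (b k)
  hρ0 : ∀ k i, ρ k i ≠ 0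
  hρ1 : ∀ k i, |ρ k i| < 1
  hconsec : ∀ k (i : Fin (l k)), ρ k i.castSucc ≠ ρ k i.succ
  hcont : ∀ k, Continuous (f k)
  haff : ∀ (k : Fin m) (i : Fin (l k + 1)) (x : ℝ),
    (∀ j : Fin (l k), (j : ℕ) < (i : ℕ) → b k j < x) →
    (∀ j : Fin (l k), (i : ℕ) ≤ (j : ℕ) → x < b k j) →
    f k x = ρ k i * x + t k i

namespace CPLIFS

variable {m : ℕ} {l : Fin m → ℕ}

/-- The index set of the affine pieces of a CPLIFS. -/
abbrev Idx (m : ℕ) (l : Fin m → ℕ) := Σ k : Fin m, Fin (l k + 1)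

/-- The self-similar IFS generated by a CPLIFS: the family of affine maps
`S_{k,i} x = ρ_{k,i} x + t_{k,i}` coinciding with `f k` on its `i`-th interval of
linearity. -/
def S (F : CPLIFS m l) (p : Idx m l) : ℝ → ℝ :=
  fun x => F.ρ p.1 p.2 * x + F.t p.1 p.2

/-- The supporting interval of a CPLIFS. -/
def supp (F : CPLIFS m l) : Set ℝ := suppInt F.f

/-- `𝓘 = f_1(I) ∪ … ∪ f_m(I)`. -/
def bigI (F : CPLIFS m l) : Set ℝ := ⋃ k, F.f k '' F.supp

/-- The `i`-th open interval of linearity of `f k`. -/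
def J (F : CPLIFS m l) (k : Fin m) (i : Fin (l k + 1)) : Set ℝ :=
  {x : ℝ | (∀ j : Fin (l k), (j : ℕ) < (i : ℕ) → F.b k j < x) ∧
           (∀ j : Fin (l k), (i : ℕ) ≤ (j : ℕ) → x < F.b k j)}

/-- The set of critical points of a CPLIFS: the `f k`-images of the endpoints of `I` and of
the breaking points, together with the points of `𝓘` at which two different branches
(local inverses of affine pieces) agree. -/
def crit (F : CPLIFS m l) : Set ℝ :=
  (⋃ k, ({F.f k (sInf F.supp), F.f k (sSup F.supp)} : Set ℝ)) ∪
  (⋃ k, ⋃ j : Fin (l k), ({F.f k (F.b k j)} : Set ℝ)) ∪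
  {x ∈ F.bigI | ∃ p q : Idx m l, p ≠ q ∧
      x ∈ F.f p.1 '' F.J p.1 p.2 ∧ x ∈ F.f q.1 '' F.J q.1 q.2 ∧
      (x - F.t p.1 p.2) / F.ρ p.1 p.2 = (x - F.t q.1 q.2) / F.ρ q.1 q.2}

/-- `Z : Fin N → ℝ × ℝ` is an (ordered) monotonicity partition of the CPLIFS `F` if the
closed intervals `[Z i .1, Z i .2]` are nondegenerate, ordered, cover `𝓘`, their endpoints
are critical points, and their interiors contain no critical point. -/
def IsMonoPartition (F : CPLIFS m l) (N : ℕ) (Z : Fin N → ℝ × ℝ) : Prop :=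
  (∀ i, (Z i).1 < (Z i).2) ∧
  (∀ i j : Fin N, i < j → (Z i).2 ≤ (Z j).1) ∧
  (⋃ i, Set.Icc (Z i).1 (Z i).2) = F.bigI ∧
  (∀ i, (Z i).1 ∈ F.crit ∧ (Z i).2 ∈ F.crit) ∧
  (∀ i, Set.Ioo (Z i).1 (Z i).2 ∩ F.crit = ∅)

/-- Two CPLIFSs (necessarily with the same number of maps and the same numbers of breaking
points) are ε-close if (a) their monotonicity partitions have the same cardinality and
corresponding intervals have endpoints within ε, (c) the logarithms of the absolute values
of corresponding slopes differ by less than ε, and (d) `sup_x |f_k x - g_k x| < ε`. -/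
def Close (ε : ℝ) (F G : CPLIFS m l) : Prop :=
  (∃ (N : ℕ) (Z W : Fin N → ℝ × ℝ), F.IsMonoPartition N Z ∧ G.IsMonoPartition N W ∧
      ∀ i, |(Z i).1 - (W i).1| < ε ∧ |(Z i).2 - (W i).2| < ε) ∧
  (∀ k i, abs (Real.log |F.ρ k i| - Real.log |G.ρ k i|) < ε) ∧
  (∀ k x, |F.f k x - G.f k x| < ε)

end CPLIFS


namespace CPLIFS

variable {m : ℕ} {l : Fin m → ℕ}

lemma exists_cut {n : ℕ} (b : Fin n → ℝ) (hb : StrictMono b) (x : ℝ) :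
    ∃ i : Fin (n + 1), ∀ j : Fin n, ((j : ℕ) < i → b j ≤ x) ∧ ((i : ℕ) ≤ j → x < b j) := by
  classical
  have hex : ∃ i : ℕ, ∀ j : Fin n, i ≤ (j : ℕ) → x < b j :=
    ⟨n, fun j hj => absurd j.2 (by omega)⟩
  have hle : Nat.find hex ≤ n := Nat.find_min' hex (fun j hj => absurd j.2 (by omega))
  refine ⟨⟨Nat.find hex, by omega⟩, fun j => ⟨fun hj => ?_, fun hj => Nat.find_spec hex j hj⟩⟩
  have := Nat.find_min hex hj
  push Not at this
  obtain ⟨j', h1, h2⟩ := this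
  exact (hb.monotone (show j ≤ j' from h1)).trans h2

lemma eq_of_eventually (F : CPLIFS m l) (k : Fin m) (i : Fin (l k + 1)) (x : ℝ) (L : Filter ℝ)
    [L.NeBot] (hL : L ≤ nhds x) (h : ∀ᶠ y in L, y ∈ F.J k i) :
    F.f k x = F.ρ k i * x + F.t k i := by
  have h1 : Tendsto (F.f k) L (nhds (F.f k x)) := ((F.hcont k).tendsto x).mono_left hL
  have h2 : Tendsto (fun y => F.ρ k i * y + F.t k i) L (nhds (F.ρ k i * x + F.t k i)) := by
    have : Continuous (fun y : ℝ => F.ρ k i * y + F.t k i) := by fun_prop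
    exact (this.tendsto x).mono_left hL
  refine tendsto_nhds_unique h1 (h2.congr' ?_)
  filter_upwards [h] with y hy
  exact (F.haff k i y hy.1 hy.2).symm

lemma right_piece (F : CPLIFS m l) (k : Fin m) (x : ℝ) :
    ∃ i : Fin (l k + 1), F.f k x = F.ρ k i * x + F.t k i ∧
      ∀ᶠ y in nhdsWithin x (Ioi x), F.f k y = F.ρ k i * y + F.t k i := by
  obtain ⟨i, hi⟩ := exists_cut (F.b k) (F.hb k) x
  have key : ∀ᶠ y in nhdsWithin x (Ioi x), y ∈ F.J k i := by
    have h1 : ∀ᶠ y in nhdsWithin x (Ioi x), ∀ j : Fin (l k), x < F.b k j → y < F.b k j := by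
      rw [Filter.eventually_all]
      intro j
      by_cases h : x < F.b k j
      · have : ∀ᶠ y in nhds x, y < F.b k j := eventually_lt_nhds h
        filter_upwards [this.filter_mono nhdsWithin_le_nhds] with y hy _ using hy
      · exact Eventually.of_forall (fun y hy => absurd hy h)
    filter_upwards [h1, self_mem_nhdsWithin] with y hy hxy
    exact ⟨fun j hj => ((hi j).1 hj).trans_lt hxy, fun j hj => hy j ((hi j).2 hj)⟩
  refine ⟨i, F.eq_of_eventually k i x _ nhdsWithin_le_nhds key, ?_⟩
  filter_upwards [key] with y hy using F.haff k i y hy.1 hy.2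

lemma exists_piece (F : CPLIFS m l) (k : Fin m) (x : ℝ) :
    ∃ i : Fin (l k + 1), F.f k x = F.ρ k i * x + F.t k i := by
  obtain ⟨i, hi, _⟩ := F.right_piece k x
  exact ⟨i, hi⟩

lemma break_left (F : CPLIFS m l) (k : Fin m) (j : Fin (l k)) :
    F.f k (F.b k j) = F.ρ k j.castSucc * F.b k j + F.t k j.castSucc := by
  refine F.eq_of_eventually k _ _ (nhdsWithin (F.b k j) (Iio (F.b k j))) nhdsWithin_le_nhds ?_
  have h1 : ∀ᶠ y in nhdsWithin (F.b k j) (Iio (F.b k j)), ∀ j' : Fin (l k),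
      j' < j → F.b k j' < y := by
    rw [Filter.eventually_all]
    intro j'
    by_cases h : j' < j
    · have : ∀ᶠ y in nhds (F.b k j), F.b k j' < y := eventually_gt_nhds (F.hb k h)
      filter_upwards [this.filter_mono nhdsWithin_le_nhds] with y hy _ using hy
    · exact Eventually.of_forall (fun y hy => absurd hy h)
  filter_upwards [h1, self_mem_nhdsWithin] with y hy hxy
  refine ⟨fun j' hj => hy j' hj, fun j' hj => ?_⟩
  exact lt_of_lt_of_le hxy ((F.hb k).monotone (show j ≤ j' from hj))

lemma break_right (F : CPLIFS m l) (k : Fin m) (j : Fin (l k)) :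
    F.f k (F.b k j) = F.ρ k j.succ * F.b k j + F.t k j.succ := by
  refine F.eq_of_eventually k _ _ (nhdsWithin (F.b k j) (Ioi (F.b k j))) nhdsWithin_le_nhds ?_
  have h1 : ∀ᶠ y in nhdsWithin (F.b k j) (Ioi (F.b k j)), ∀ j' : Fin (l k),
      j < j' → y < F.b k j' := by
    rw [Filter.eventually_all]
    intro j'
    by_cases h : j < j'
    · have : ∀ᶠ y in nhds (F.b k j), y < F.b k j' := eventually_lt_nhds (F.hb k h)
      filter_upwards [this.filter_mono nhdsWithin_le_nhds] with y hy _ using hy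
    · exact Eventually.of_forall (fun y hy => absurd hy h)
  filter_upwards [h1, self_mem_nhdsWithin] with y hy hxy
  refine ⟨fun j' hj => ?_, fun j' hj => hy j' ?_⟩
  · refine lt_of_le_of_lt ((F.hb k).monotone (show j' ≤ j from ?_)) hxy
    have : (j' : ℕ) < j + 1 := by simpa using hj
    exact Nat.lt_succ_iff.mp this
  · have : (j : ℕ) + 1 ≤ j' := by simpa using hj
    exact this

lemma lip (F : CPLIFS m l) (r : ℝ) (hr : ∀ k i, |F.ρ k i| ≤ r) (k : Fin m) (x y : ℝ) :
    |F.f k x - F.f k y| ≤ r * |x - y| := by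
  wlog h : y ≤ x generalizing x y
  · rw [abs_sub_comm, abs_sub_comm x y]
    exact this y x (le_of_not_ge h)
  choose i hi hi' using F.right_piece k
  have := norm_image_sub_le_of_norm_deriv_right_le_segment (f := F.f k) (a := y) (b := x)
    (f' := fun z => F.ρ k (i z)) (C := r) (F.hcont k).continuousOn ?_ ?_ x ⟨h, le_refl x⟩
  · rw [Real.norm_eq_abs] at this
    rwa [abs_of_nonneg (sub_nonneg.2 h)]
  · intro z _
    have hd : HasDerivWithinAt (fun u => F.ρ k (i z) * u + F.t k (i z)) (F.ρ k (i z)) (Ioi z) z := by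
      have := ((hasDerivAt_id z).const_mul (F.ρ k (i z))).add_const (F.t k (i z))
      simpa using this.hasDerivWithinAt
    have := hd.congr_of_eventuallyEq (hi' z) (hi z)
    exact this.Ici_of_Ioi
  · intro z _
    exact hr _ _

lemma exists_rate (F : CPLIFS m l) : ∃ r : ℝ, 0 < r ∧ r < 1 ∧ ∀ k i, |F.ρ k i| ≤ r := by
  classical
  have hm := F.hm
  let k0 : Fin m := ⟨0, by omega⟩
  have : Nonempty (Idx m l) := ⟨⟨k0, 0⟩⟩
  obtain ⟨p, hp⟩ := Finite.exists_max (fun p : Idx m l => |F.ρ p.1 p.2|)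
  exact ⟨|F.ρ p.1 p.2|, abs_pos.2 (F.hρ0 _ _), F.hρ1 _ _, fun k i => hp ⟨k, i⟩⟩

lemma exists_low (F : CPLIFS m l) : ∃ c : ℝ, 0 < c ∧ ∀ k i, c ≤ |F.ρ k i| := by
  classical
  have hm := F.hm
  let k0 : Fin m := ⟨0, by omega⟩
  have : Nonempty (Idx m l) := ⟨⟨k0, 0⟩⟩
  obtain ⟨p, hp⟩ := Finite.exists_min (fun p : Idx m l => |F.ρ p.1 p.2|)
  exact ⟨|F.ρ p.1 p.2|, abs_pos.2 (F.hρ0 _ _), fun k i => hp ⟨k, i⟩⟩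

/-- lower bound of image size -/
lemma diam_low (F : CPLIFS m l) (c : ℝ) (hc : 0 < c) (hlow : ∀ k i, c ≤ |F.ρ k i|)
    (k : Fin m) (T : Set ℝ) (hT : T.OrdConnected) (hTb : Bornology.IsBounded T) :
    Metric.diam T ≤ ((l k + 1 : ℝ) / c) * Metric.diam (F.f k '' T) := by
  obtain ⟨r, hr0, hr1, hr⟩ := F.exists_rate
  have hLip : LipschitzWith (Real.toNNReal r) (F.f k) := by
    refine LipschitzWith.of_dist_le_mul (fun x y => ?_)
    rw [Real.dist_eq, Real.dist_eq, Real.coe_toNNReal r hr0.le]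
    exact F.lip r hr k x y
  have hfb : Bornology.IsBounded (F.f k '' T) := hLip.isBounded_image hTb
  set D := Metric.diam (F.f k '' T) with hD
  have hD0 : 0 ≤ D := Metric.diam_nonneg
  have hl : (0:ℝ) < l k + 1 := by positivity
  refine Metric.diam_le_of_forall_dist_le (by positivity) ?_
  intro x hx y hy
  have hsub : uIcc y x ⊆ T := hT.uIcc_subset hy hx
  have hcov : uIcc y x ⊆ ⋃ i : Fin (l k + 1), {z ∈ T | F.f k z = F.ρ k i * z + F.t k i} := by
    intro z hz
    obtain ⟨i, hi⟩ := F.exists_piece k z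
    exact mem_iUnion.2 ⟨i, hsub hz, hi⟩
  have hpiece : ∀ i : Fin (l k + 1),
      volume {z ∈ T | F.f k z = F.ρ k i * z + F.t k i} ≤ ENNReal.ofReal (D / c) := by
    intro i
    refine (Real.volume_le_diam _).trans ?_
    refine Metric.ediam_le (fun u hu v hv => ?_)
    rw [edist_dist]
    refine ENNReal.ofReal_le_ofReal ?_
    rw [le_div_iff₀ hc, Real.dist_eq]
    have h1 : dist (F.f k u) (F.f k v) ≤ D :=
      Metric.dist_le_diam_of_mem hfb (mem_image_of_mem _ hu.1) (mem_image_of_mem _ hv.1)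
    rw [Real.dist_eq, hu.2, hv.2] at h1
    have h2 : F.ρ k i * u + F.t k i - (F.ρ k i * v + F.t k i) = F.ρ k i * (u - v) := by ring
    rw [h2, abs_mul] at h1
    have := mul_le_mul_of_nonneg_right (hlow k i) (abs_nonneg (u - v))
    linarith
  have h3 : volume (uIcc y x) ≤ ENNReal.ofReal ((l k + 1 : ℝ) / c * D) := by
    calc volume (uIcc y x) ≤ volume (⋃ i : Fin (l k + 1), {z ∈ T | F.f k z = F.ρ k i * z + F.t k i}) :=
          measure_mono hcov
      _ ≤ ∑ i : Fin (l k + 1), volume {z ∈ T | F.f k z = F.ρ k i * z + F.t k i} :=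
          measure_iUnion_fintype_le _ _
      _ ≤ ∑ i : Fin (l k + 1), ENNReal.ofReal (D / c) := Finset.sum_le_sum (fun i _ => hpiece i)
      _ = ENNReal.ofReal ((l k + 1 : ℝ) / c * D) := by
          rw [Finset.sum_const, Finset.card_univ, Fintype.card_fin, nsmul_eq_mul]
          rw [← ENNReal.ofReal_natCast, ← ENNReal.ofReal_mul (by positivity)]
          congr 1
          push_cast
          ring
  rw [Real.volume_interval] at h3
  rw [Real.dist_eq]
  exact (ENNReal.ofReal_le_ofReal_iff (by positivity)).1 h3

end CPLIFS

lemma compFam_nil {ι : Type*} (S : ι → ℝ → ℝ) (x : ℝ) : compFam S [] x = x := rfl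

lemma compFam_cons {ι : Type*} (S : ι → ℝ → ℝ) (k : ι) (w : List ι) (x : ℝ) :
    compFam S (k :: w) x = S k (compFam S w x) := rfl

lemma compFam_append {ι : Type*} (S : ι → ℝ → ℝ) (u w : List ι) (x : ℝ) :
    compFam S (u ++ w) x = compFam S u (compFam S w x) := by
  induction u with
  | nil => rfl
  | cons k u ih => rw [List.cons_append, compFam_cons, compFam_cons, ih]

namespace CPLIFS

variable {m : ℕ} {l : Fin m → ℕ}

lemma compS_affine (F : CPLIFS m l) (p : List (Idx m l)) :
    ∃ a c : ℝ, ∀ x, compFam F.S p x = a * x + c := by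
  induction p with
  | nil => exact ⟨1, 0, fun x => by simp [compFam_nil]⟩
  | cons q p ih =>
    obtain ⟨a, c, h⟩ := ih
    refine ⟨F.ρ q.1 q.2 * a, F.ρ q.1 q.2 * c + F.t q.1 q.2, fun x => ?_⟩
    rw [compFam_cons, h]
    simp only [S]
    ring

lemma lift_word (F : CPLIFS m l) (u : List (Fin m)) (x : ℝ) :
    ∃ p : List (Idx m l), p.length = u.length ∧ compFam F.S p x = compFam F.f u x := by
  induction u with
  | nil => exact ⟨[], rfl, rfl⟩
  | cons k u ih =>
    obtain ⟨p, hp, hx⟩ := ih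
    obtain ⟨i, hi⟩ := F.exists_piece k (compFam F.f u x)
    refine ⟨⟨k, i⟩ :: p, by simp [hp], ?_⟩
    rw [compFam_cons, compFam_cons, hx, hi]
    rfl

lemma no_cycle (F : CPLIFS m l) (hno : NoExactOverlap F.S) (u : List (Fin m)) (k : Fin m)
    (j : Fin (l k)) : compFam F.f (u ++ [k]) (F.b k j) ≠ F.b k j := by
  intro h
  rw [compFam_append] at h
  have hk : compFam F.f [k] (F.b k j) = F.f k (F.b k j) := rfl
  rw [hk] at h
  obtain ⟨p, hp, hx⟩ := F.lift_word u (F.f k (F.b k j))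
  let q1 : Idx m l := ⟨k, j.castSucc⟩
  let q2 : Idx m l := ⟨k, j.succ⟩
  have h1 : compFam F.S (p ++ [q1]) (F.b k j) = F.b k j := by
    rw [compFam_append]
    have : compFam F.S [q1] (F.b k j) = F.f k (F.b k j) := (F.break_left k j).symm
    rw [this, hx, h]
  have h2 : compFam F.S (p ++ [q2]) (F.b k j) = F.b k j := by
    rw [compFam_append]
    have : compFam F.S [q2] (F.b k j) = F.f k (F.b k j) := (F.break_right k j).symm
    rw [this, hx, h]
  obtain ⟨a1, c1, e1⟩ := F.compS_affine (p ++ [q1])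
  obtain ⟨a2, c2, e2⟩ := F.compS_affine (p ++ [q2])
  have hcomm : compFam F.S ((p ++ [q1]) ++ (p ++ [q2])) = compFam F.S ((p ++ [q2]) ++ (p ++ [q1])) := by
    funext x
    rw [compFam_append F.S (p ++ [q1]), compFam_append F.S (p ++ [q2]), e1, e2, e2, e1]
    rw [e1] at h1
    rw [e2] at h2
    linear_combination (1 - a2) * h1 - (1 - a1) * h2
  have hgen : ∀ v v' : List (Idx m l), v.length = v'.length → 1 ≤ v.length →
      compFam F.S v = compFam F.S v' → v = v' := by
    intro v v' hl h1 hv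
    have := hno v.length h1 (fun i => v.get i) (fun i => v'.get (i.cast hl)) ?_
    · refine List.ext_get hl (fun n h1 h2 => ?_)
      exact congrFun this ⟨n, h1⟩
    · have e1 : List.ofFn (fun i => v.get i) = v := List.ofFn_get v
      have e2 : List.ofFn (fun i : Fin v.length => v'.get (i.cast hl)) = v' := by
        refine List.ext_get (by simp [hl]) (fun n h1 h2 => ?_)
        simp
      rw [e1, e2]; exact hv
  have := hgen _ _ (by simp) (by simp; omega) hcomm
  have h3 := (List.append_inj this (by simp)).1
  have h4 : q1 = q2 := by simpa using h3
  have h5 : j.castSucc = j.succ := by simpa [q1, q2] using h4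
  have := congrArg Fin.val h5
  simp at this

lemma break_close (F : CPLIFS m l) (η : ℝ) (hη : 0 < η) :
    ∃ δ > (0:ℝ), ∀ G : CPLIFS m l, (∀ k x, |F.f k x - G.f k x| < δ) →
      ∀ k j, |F.b k j - G.b k j| < η := by
  classical
  -- gap
  obtain ⟨g, hg0, hg⟩ : ∃ g > (0:ℝ), ∀ k (j j' : Fin (l k)), j < j' → g < F.b k j' - F.b k j := by
    have : ∀ q : (Σ k : Fin m, Fin (l k) × Fin (l k)), ∃ g > (0:ℝ), ∀ g', g' ≤ g →
        (q.2.1 < q.2.2 → g' < F.b q.1 q.2.2 - F.b q.1 q.2.1) := by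
      intro q
      by_cases h : q.2.1 < q.2.2
      · have := F.hb q.1 h
        exact ⟨(F.b q.1 q.2.2 - F.b q.1 q.2.1) / 2, by linarith, fun g' hg' _ => by linarith⟩
      · exact ⟨1, one_pos, fun g' _ h' => absurd h' h⟩
    choose g hg0 hg using this
    obtain ⟨c, hc0, hc⟩ : ∃ c > (0:ℝ), ∀ q, c ≤ g q := by
      rcases isEmpty_or_nonempty (Σ k : Fin m, Fin (l k) × Fin (l k)) with he | he
      · exact ⟨1, one_pos, fun q => (he.false q).elim⟩
      · obtain ⟨q, hq⟩ := Finite.exists_min g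
        exact ⟨g q, hg0 q, hq⟩
    exact ⟨c, hc0, fun k j j' h => hg ⟨k, j, j'⟩ c (hc _) h⟩
  obtain ⟨d, hd0, hd⟩ : ∃ d > (0:ℝ), ∀ k (j : Fin (l k)), d ≤ |F.ρ k j.succ - F.ρ k j.castSucc| := by
    rcases isEmpty_or_nonempty (Σ k : Fin m, Fin (l k)) with he | he
    · exact ⟨1, one_pos, fun k j => (he.false ⟨k, j⟩).elim⟩
    · obtain ⟨q, hq⟩ := Finite.exists_min
        (fun q : (Σ k : Fin m, Fin (l k)) => |F.ρ q.1 q.2.succ - F.ρ q.1 q.2.castSucc|)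
      exact ⟨_, abs_pos.2 (sub_ne_zero.2 (F.hconsec q.1 q.2).symm), fun k j => hq ⟨k, j⟩⟩
  let η' := min η (g / 2)
  have hη' : 0 < η' := lt_min hη (by linarith)
  have hη1 : η' ≤ η := min_le_left _ _
  have hη2 : η' ≤ g / 2 := min_le_right _ _
  refine ⟨(η' / 2) * d / 8, by positivity, fun G hG k => ?_⟩
  set e := η' / 2 with he
  have he0 : 0 < e := by positivity
  have hex : ∀ j, ∃ j', |F.b k j - G.b k j'| < η' := by
    intro j
    by_contra hcon
    push Not at hcon
    set b := F.b k j with hb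
    have fl : F.f k (b - e) = F.ρ k j.castSucc * (b - e) + F.t k j.castSucc := by
      refine F.haff k _ _ (fun j' hj => ?_) (fun j' hj => ?_)
      · have := hg k j' j (show j' < j from hj)
        linarith
      · have := (F.hb k).monotone (show j ≤ j' from hj)
        linarith
    have fr : F.f k (b + e) = F.ρ k j.succ * (b + e) + F.t k j.succ := by
      refine F.haff k _ _ (fun j' hj => ?_) (fun j' hj => ?_)
      · have h1 : (j' : ℕ) < j + 1 := by simpa using hj
        have := (F.hb k).monotone (show j' ≤ j from Nat.lt_succ_iff.mp h1)
        linarith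
      · have h1 : (j : ℕ) + 1 ≤ j' := by simpa using hj
        have := hg k j j' (show j < j' from h1)
        linarith
    have f1 := F.break_left k j
    have f2 := F.break_right k j
    obtain ⟨i, hi⟩ := exists_cut (G.b k) (G.hb k) b
    have hgaff : ∀ y, b - e ≤ y → y ≤ b + e → G.f k y = G.ρ k i * y + G.t k i := by
      intro y h1 h2
      refine G.haff k i y (fun j' hj => ?_) (fun j' hj => ?_)
      · have h3 := (hi j').1 hj
        have h4 := hcon j'
        rw [abs_of_nonneg (by linarith)] at h4
        linarith
      · have h3 := (hi j').2 hj
        have h4 := hcon j'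
        rw [abs_of_nonpos (by linarith)] at h4
        linarith
    have g1 := hgaff (b - e) le_rfl (by linarith)
    have g2 := hgaff b (by linarith) (by linarith)
    have g3 := hgaff (b + e) (by linarith) le_rfl
    have a1 := abs_lt.1 (hG k (b - e))
    have a2 := abs_lt.1 (hG k b)
    have a3 := abs_lt.1 (hG k (b + e))
    have hsec : F.f k (b - e) + F.f k (b + e) - 2 * F.f k b
        = e * (F.ρ k j.succ - F.ρ k j.castSucc) := by
      rw [fl, fr]
      linear_combination -f1 - f2
    have hsecg : G.f k (b - e) + G.f k (b + e) - 2 * G.f k b = 0 := by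
      rw [g1, g2, g3]; ring
    have h5 : |e * (F.ρ k j.succ - F.ρ k j.castSucc)| < e * d := by
      rw [← hsec, abs_lt]
      constructor <;> nlinarith
    rw [abs_mul, abs_of_pos he0] at h5
    have := mul_le_mul_of_nonneg_left (hd k j) he0.le
    linarith
  choose σ hσ using hex
  have hmono : StrictMono σ := by
    intro j j' h
    have h1 := hg k j j' h
    have h2 := abs_lt.1 (hσ j)
    have h3 := abs_lt.1 (hσ j')
    by_contra hcon
    have h4 := (G.hb k).monotone (not_lt.1 hcon)
    linarith [h2.1, h2.2, h3.1, h3.2]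
  have hid : σ = id := by
    have : Set.range σ = Set.range (id : Fin (l k) → Fin (l k)) := by
      rw [Set.range_id]
      exact (Finite.surjective_of_injective hmono.injective).range_eq
    exact (hmono.range_inj strictMono_id).1 this
  intro j
  have := hσ j
  rw [hid] at this
  exact this.trans_le hη1

lemma exists_fix (F : CPLIFS m l) (k : Fin m) : ∃ z : ℝ, F.f k z = z ∧
    ∀ J : Set ℝ, J.Nonempty → IsClosed J → F.f k '' J ⊆ J → z ∈ J := by
  obtain ⟨r, hr0, hr1, hr⟩ := F.exists_rate
  have hc : ContractingWith (Real.toNNReal r) (F.f k) := by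
    refine ⟨?_, LipschitzWith.of_dist_le_mul (fun x y => ?_)⟩
    · rw [← NNReal.coe_lt_coe, Real.coe_toNNReal r hr0.le]; exact_mod_cast hr1
    · rw [Real.dist_eq, Real.dist_eq, Real.coe_toNNReal r hr0.le]
      exact F.lip r hr k x y
  refine ⟨ContractingWith.fixedPoint (F.f k) hc, hc.fixedPoint_isFixedPt, ?_⟩
  rintro J ⟨x, hx⟩ hJ hinv
  refine hJ.mem_of_tendsto (hc.tendsto_iterate_fixedPoint x) (Eventually.of_forall (fun n => ?_))
  induction n with
  | zero => exact hx
  | succ n ih =>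
    rw [Function.iterate_succ_apply']
    exact hinv (mem_image_of_mem _ ih)

lemma supp_good (F : CPLIFS m l) : (suppInt F.f).OrdConnected ∧ Bornology.IsBounded (suppInt F.f) ∧
    ∃ x ∈ suppInt F.f, ∃ y ∈ suppInt F.f, x ≠ y := by
  unfold suppInt
  split_ifs with h
  · refine ⟨ordConnected_Icc, Metric.isBounded_Icc _ _, h.choose, ⟨by linarith, by linarith⟩,
      h.choose + 1/2, ⟨by linarith, by linarith⟩, by linarith⟩
  · obtain ⟨r, hr0, hr1, hr⟩ := F.exists_rate
    have hmem : ∀ k z, (F.f k z = z ∧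
        ∀ J : Set ℝ, J.Nonempty → IsClosed J → F.f k '' J ⊆ J → z ∈ J) →
        z ∈ ⋂₀ {J : Set ℝ | J.Nonempty ∧ (∃ a b : ℝ, J = Set.Icc a b) ∧ ∀ k, F.f k '' J ⊆ J} := by
      rintro k z ⟨_, hz⟩ J ⟨hJ, ⟨a, b, rfl⟩, hinv⟩
      exact hz _ hJ isClosed_Icc (hinv k)
    choose z hz using F.exists_fix
    refine ⟨?_, ?_, ?_⟩
    · refine ordConnected_sInter ?_
      rintro J ⟨hJ, ⟨a, b, rfl⟩, hinv⟩
      exact ordConnected_Icc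
    · let R := (∑ k, |F.f k 0|) / (1 - r)
      have h1r : 0 < 1 - r := by linarith
      have hR : 0 ≤ R := div_nonneg (Finset.sum_nonneg fun k _ => abs_nonneg _) h1r.le
      refine (Metric.isBounded_Icc (-R) R).subset (sInter_subset_of_mem ?_)
      refine ⟨⟨0, by linarith, hR⟩, ⟨_, _, rfl⟩, ?_⟩
      rintro k _ ⟨x, hx, rfl⟩
      have h1 := F.lip r hr k x 0
      have h2 : |F.f k 0| ≤ R * (1 - r) := by
        rw [div_mul_cancel₀ _ h1r.ne']
        exact Finset.single_le_sum (f := fun k => |F.f k 0|) (fun k _ => abs_nonneg _) (Finset.mem_univ k)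
      have h3 : |x| ≤ R := abs_le.2 hx
      rw [sub_zero] at h1
      have h4 : |F.f k x| ≤ |F.f k x - F.f k 0| + |F.f k 0| := by
        have := abs_add_le (F.f k x - F.f k 0) (F.f k 0)
        simpa using this
      have h5 := mul_le_mul_of_nonneg_left h3 hr0.le
      exact abs_le.1 (by linarith)
    · have hm := F.hm
      let k0 : Fin m := ⟨0, by omega⟩
      have : ∃ k, F.f k (z k0) ≠ z k0 := by
        by_contra hcon
        push Not at hcon
        exact h ⟨z k0, hcon⟩
      obtain ⟨k, hk⟩ := this
      refine ⟨z k0, hmem k0 _ (hz k0), z k, hmem k _ (hz k), fun he => hk ?_⟩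
      rw [he]; exact (hz k).1

end CPLIFS

namespace CPLIFS

variable {m : ℕ} {l : Fin m → ℕ}

/-- the point `x` is within `R` of a breaking point of `f k` -/
def BadAt (F : CPLIFS m l) (R : ℝ) (k : Fin m) (x : ℝ) : Prop := ∃ j : Fin (l k), |x - F.b k j| ≤ R

open Classical in
/-- number of bad times -/
def cnt (F : CPLIFS m l) (R x : ℝ) : List (Fin m) → ℕ
  | [] => 0
  | k :: w => cnt F R x w + if F.BadAt R k (compFam F.f w x) then 1 else 0

lemma comp_lip (F : CPLIFS m l) (r : ℝ) (hr0 : 0 ≤ r) (hr : ∀ k i, |F.ρ k i| ≤ r)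
    (w : List (Fin m)) (x y : ℝ) :
    |compFam F.f w x - compFam F.f w y| ≤ r ^ w.length * |x - y| := by
  induction w with
  | nil => simp [compFam_nil]
  | cons k w ih =>
    rw [compFam_cons, compFam_cons, List.length_cons, pow_succ']
    calc _ ≤ r * |compFam F.f w x - compFam F.f w y| := F.lip r hr k _ _
      _ ≤ r * (r ^ w.length * |x - y|) := mul_le_mul_of_nonneg_left ih hr0
      _ = _ := by ring

lemma comp_near (F G : CPLIFS m l) (r : ℝ) (hr0 : 0 ≤ r) (hr1 : r < 1) (hr : ∀ k i, |F.ρ k i| ≤ r)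
    (δ : ℝ) (hG : ∀ k x, |F.f k x - G.f k x| < δ) (hδ : 0 ≤ δ)
    (w : List (Fin m)) (x y : ℝ) :
    |compFam F.f w x - compFam G.f w y| ≤ r ^ w.length * |x - y| + δ / (1 - r) := by
  have h1 : 0 < 1 - r := by linarith
  induction w with
  | nil => simp only [compFam_nil, List.length_nil, pow_zero, one_mul]; linarith [div_nonneg hδ h1.le]
  | cons k w ih =>
    rw [compFam_cons, compFam_cons, List.length_cons, pow_succ']
    have e1 := F.lip r hr k (compFam F.f w x) (compFam G.f w y)
    have e2 := hG k (compFam G.f w y)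
    have e3 := abs_sub_le (F.f k (compFam F.f w x)) (F.f k (compFam G.f w y)) (G.f k (compFam G.f w y))
    have e4 := mul_le_mul_of_nonneg_left ih hr0
    have e5 : r * (δ / (1 - r)) + δ = δ / (1 - r) := by field_simp; ring
    nlinarith

lemma exists_R (F : CPLIFS m l) (hno : NoExactOverlap F.S) (N : ℕ) :
    ∃ R > (0:ℝ), ∀ (u : List (Fin m)) (k : Fin m) (j : Fin (l k)), u.length ≤ N →
      2 * R < |compFam F.f (u ++ [k]) (F.b k j) - F.b k j| := by
  have := (List.finite_length_le (Fin m) N).to_subtype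
  let X := {u : List (Fin m) | u.length ≤ N} × (Σ k : Fin m, Fin (l k))
  let φ : X → ℝ := fun q => |compFam F.f (q.1.1 ++ [q.2.1]) (F.b q.2.1 q.2.2) - F.b q.2.1 q.2.2|
  have hφ : ∀ q, 0 < φ q := fun q => abs_pos.2 (sub_ne_zero.2 (F.no_cycle hno _ _ _))
  obtain ⟨c, hc0, hc⟩ : ∃ c > (0:ℝ), ∀ q, c ≤ φ q := by
    rcases isEmpty_or_nonempty X with he | he
    · exact ⟨1, one_pos, fun q => (he.false q).elim⟩
    · obtain ⟨q, hq⟩ := Finite.exists_min φ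
      exact ⟨φ q, hφ q, hq⟩
  refine ⟨c / 4, by positivity, fun u k j hu => ?_⟩
  have := hc (⟨u, hu⟩, ⟨k, j⟩)
  simp only [φ] at this
  linarith

lemma cnt_append (F : CPLIFS m l) (R x : ℝ) (u w : List (Fin m)) :
    F.cnt R x (u ++ w) = F.cnt R x w + F.cnt R (compFam F.f w x) u := by
  induction u with
  | nil => simp [cnt]
  | cons k u ih => rw [List.cons_append, cnt, cnt, ih, compFam_append, add_assoc]

lemma cnt_le (F : CPLIFS m l) (N : ℕ) (R : ℝ)
    (hR : ∀ (u : List (Fin m)) (k : Fin m) (j : Fin (l k)), u.length ≤ N →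
      2 * R < |compFam F.f (u ++ [k]) (F.b k j) - F.b k j|) (u : List (Fin m)) (hu : u.length ≤ N)
    (x : ℝ) : F.cnt R x u ≤ Fintype.card (Σ k : Fin m, Fin (l k)) := by
  classical
  obtain ⟨r, hr0, hr1, hr⟩ := F.exists_rate
  suffices h : ∀ u : List (Fin m), u.length ≤ N → ∃ H : Finset (Σ k : Fin m, Fin (l k)),
      F.cnt R x u ≤ H.card ∧ ∀ q ∈ H, ∃ u1 u2, u = u1 ++ q.1 :: u2 ∧
        |compFam F.f u2 x - F.b q.1 q.2| ≤ R by
    obtain ⟨H, h1, _⟩ := h u hu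
    exact h1.trans (Finset.card_le_univ H)
  clear hu u
  intro u
  induction u with
  | nil => intro _; exact ⟨∅, by simp [cnt], by simp⟩
  | cons k u ih =>
    intro hu
    rw [List.length_cons] at hu
    obtain ⟨H, h1, h2⟩ := ih (by omega)
    by_cases hbad : F.BadAt R k (compFam F.f u x)
    · obtain ⟨j, hj⟩ := id hbad
      have hnot : (⟨k, j⟩ : Σ k : Fin m, Fin (l k)) ∉ H := by
        intro hmem
        obtain ⟨u1, u2, he, hd⟩ := h2 _ hmem
        simp only at he hd
        have hlen : u1.length ≤ N := by
          have := congrArg List.length he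
          simp at this
          omega
        have h3 := hR u1 k j hlen
        have h4 := F.comp_lip r hr0.le hr (u1 ++ [k]) (F.b k j) (compFam F.f u2 x)
        have h5 : compFam F.f (u1 ++ [k]) (compFam F.f u2 x) = compFam F.f u x := by
          rw [he, ← compFam_append]; simp
        rw [h5] at h4
        have h6 : r ^ (u1 ++ [k]).length * |F.b k j - compFam F.f u2 x| ≤ 1 * |F.b k j - compFam F.f u2 x| :=
          mul_le_mul_of_nonneg_right (pow_le_one₀ hr0.le hr1.le) (abs_nonneg _)
        rw [abs_sub_comm (F.b k j)] at h6
        rw [abs_sub_comm (F.b k j)] at h4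
        have h7 := abs_sub_le (compFam F.f (u1 ++ [k]) (F.b k j)) (compFam F.f u x) (F.b k j)
        linarith
      refine ⟨insert ⟨k, j⟩ H, ?_, ?_⟩
      · rw [Finset.card_insert_of_notMem hnot, cnt, if_pos hbad]
        omega
      · intro q hq
        rcases Finset.mem_insert.1 hq with rfl | hq
        · exact ⟨[], u, rfl, hj⟩
        · obtain ⟨u1, u2, he, hd⟩ := h2 q hq
          exact ⟨k :: u1, u2, by rw [he]; rfl, hd⟩
    · refine ⟨H, ?_, ?_⟩
      · rw [cnt, if_neg hbad]; omega
      · intro q hq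
        obtain ⟨u1, u2, he, hd⟩ := h2 q hq
        exact ⟨k :: u1, u2, by rw [he]; rfl, hd⟩

lemma cnt_total (F : CPLIFS m l) (N : ℕ) (hN : 1 ≤ N) (R : ℝ)
    (hR : ∀ (u : List (Fin m)) (k : Fin m) (j : Fin (l k)), u.length ≤ N →
      2 * R < |compFam F.f (u ++ [k]) (F.b k j) - F.b k j|) (n : ℕ) :
    ∀ (w : List (Fin m)), w.length = n → ∀ (x : ℝ),
      F.cnt R x w ≤ Fintype.card (Σ k : Fin m, Fin (l k)) * (n / N + 1) := by
  induction n using Nat.strong_induction_on with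
  | _ n ih =>
    intro w hw x
    by_cases h : w.length ≤ N
    · exact (F.cnt_le N R hR w h x).trans (Nat.le_mul_of_pos_right _ (Nat.succ_pos _))
    · have h1 := F.cnt_append R x (w.take N) (w.drop N)
      rw [List.take_append_drop] at h1
      have h2 := F.cnt_le N R hR (w.take N) (by simp) (compFam F.f (w.drop N) x)
      have h3 := ih (n - N) (by omega) (w.drop N) (by simp [hw]) x
      have h4 : n / N = (n - N) / N + 1 := by
        rw [← Nat.add_div_right _ (by omega)]; congr 1; omega
      rw [h1, h4]
      nlinarith

open scoped Pointwise in
lemma diam_affine (a c : ℝ) (f : ℝ → ℝ) (T : Set ℝ) (h : ∀ x ∈ T, f x = a * x + c) :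
    Metric.diam (f '' T) = |a| * Metric.diam T := by
  have h1 : f '' T = (fun x => x + c) '' (a • T) := by
    rw [← image_smul, image_image]
    exact image_congr h
  have h2 : Isometry (fun x : ℝ => x + c) := (IsometryEquiv.addRight c).isometry
  rw [h1, h2.diam_image, diam_smul₀, Real.norm_eq_abs]

lemma diam_up (F : CPLIFS m l) (r : ℝ) (hr0 : 0 ≤ r) (hr : ∀ k i, |F.ρ k i| ≤ r) (k : Fin m)
    (T : Set ℝ) (hT : Bornology.IsBounded T) :
    Metric.diam (F.f k '' T) ≤ r * Metric.diam T := by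
  refine Metric.diam_le_of_forall_dist_le (mul_nonneg hr0 Metric.diam_nonneg) ?_
  rintro _ ⟨x, hx, rfl⟩ _ ⟨y, hy, rfl⟩
  rw [Real.dist_eq]
  refine (F.lip r hr k x y).trans (mul_le_mul_of_nonneg_left ?_ hr0)
  rw [← Real.dist_eq]
  exact Metric.dist_le_diam_of_mem hT hx hy

/-- cylinder -/
def cyl (F : CPLIFS m l) (w : List (Fin m)) : Set ℝ := compFam F.f w '' suppInt F.f

lemma cyl_cons (F : CPLIFS m l) (k : Fin m) (w : List (Fin m)) :
    F.cyl (k :: w) = F.f k '' F.cyl w := by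
  unfold cyl
  rw [image_image]
  rfl

lemma cyl_nil (F : CPLIFS m l) : F.cyl [] = suppInt F.f := by
  unfold cyl
  exact image_id _

lemma cyl_good (F : CPLIFS m l) (w : List (Fin m)) :
    (F.cyl w).OrdConnected ∧ Bornology.IsBounded (F.cyl w) := by
  induction w with
  | nil => rw [cyl_nil]; exact ⟨F.supp_good.1, F.supp_good.2.1⟩
  | cons k w ih =>
    obtain ⟨r, hr0, hr1, hr⟩ := F.exists_rate
    have hLip : LipschitzWith (Real.toNNReal r) (F.f k) := by
      refine LipschitzWith.of_dist_le_mul (fun x y => ?_)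
      rw [Real.dist_eq, Real.dist_eq, Real.coe_toNNReal r hr0.le]
      exact F.lip r hr k x y
    rw [cyl_cons]
    refine ⟨?_, hLip.isBounded_image ih.2⟩
    rw [← isPreconnected_iff_ordConnected]
    exact (isPreconnected_iff_ordConnected.2 ih.1).image _ (F.hcont k).continuousOn

lemma cyl_low (F : CPLIFS m l) (A : ℝ) (hA : 0 ≤ A) (hlow : ∀ k (T : Set ℝ), T.OrdConnected →
    Bornology.IsBounded T → Metric.diam T ≤ A * Metric.diam (F.f k '' T)) (w : List (Fin m)) :
    Metric.diam (F.cyl []) ≤ A ^ w.length * Metric.diam (F.cyl w) := by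
  induction w with
  | nil => simp
  | cons k w ih =>
    refine ih.trans ?_
    have := hlow k _ (F.cyl_good w).1 (F.cyl_good w).2
    rw [← cyl_cons] at this
    rw [List.length_cons, pow_succ, mul_assoc]
    exact mul_le_mul_of_nonneg_left this (by positivity)

lemma cyl_up (F : CPLIFS m l) (r : ℝ) (hr0 : 0 ≤ r) (hr : ∀ k i, |F.ρ k i| ≤ r)
    (w : List (Fin m)) :
    Metric.diam (F.cyl w) ≤ r ^ w.length * Metric.diam (F.cyl []) := by
  induction w with
  | nil => simp
  | cons k w ih =>
    rw [cyl_cons, List.length_cons, pow_succ', mul_assoc]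
    exact (F.diam_up r hr0 hr k _ (F.cyl_good w).2).trans (mul_le_mul_of_nonneg_left ih hr0)

lemma exists_A (F : CPLIFS m l) (c : ℝ) (hc : 0 < c) : ∃ A : ℝ, 1 ≤ A ∧
    ∀ G : CPLIFS m l, (∀ k i, c ≤ |G.ρ k i|) → ∀ k (T : Set ℝ), T.OrdConnected →
    Bornology.IsBounded T → Metric.diam T ≤ A * Metric.diam (G.f k '' T) := by
  refine ⟨max 1 (∑ k : Fin m, (l k + 1 : ℝ) / c), le_max_left _ _, fun G hG k T h1 h2 => ?_⟩
  refine (G.diam_low c hc hG k T h1 h2).trans (mul_le_mul_of_nonneg_right ?_ Metric.diam_nonneg)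
  refine le_trans ?_ (le_max_right _ _)
  exact Finset.single_le_sum (f := fun k : Fin m => (l k + 1 : ℝ) / c)
    (fun k _ => by positivity) (Finset.mem_univ k)

lemma nil_pos (F : CPLIFS m l) : 0 < Metric.diam (F.cyl []) := by
  rw [cyl_nil]
  obtain ⟨_, hb, x, hx, y, hy, hxy⟩ := F.supp_good
  exact (dist_pos.2 hxy).trans_le (Metric.dist_le_diam_of_mem hb hx hy)

lemma cyl_pos (F : CPLIFS m l) (w : List (Fin m)) : 0 < Metric.diam (F.cyl w) := by
  obtain ⟨c, hc, hlow⟩ := F.exists_low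
  obtain ⟨A, hA, h⟩ := F.exists_A c hc
  have h1 := F.cyl_low A (by linarith) (h F hlow) w
  have h2 := F.nil_pos
  have h3 : 0 < A ^ w.length := by positivity
  by_contra hcon
  have : A ^ w.length * Metric.diam (F.cyl w) ≤ 0 :=
    mul_nonpos_of_nonneg_of_nonpos h3.le (not_lt.1 hcon)
  linarith

end CPLIFS

namespace CPLIFS

variable {m : ℕ} {l : Fin m → ℕ}

lemma step_good (F G : CPLIFS m l) (R : ℝ) (k : Fin m) (x0 : ℝ) (T T' : Set ℝ)
    (hb : ∀ j, |F.b k j - G.b k j| < R / 3) (hT : ∀ x ∈ T, |x - x0| ≤ R / 3)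
    (hT' : ∀ x ∈ T', |x - x0| ≤ R / 3) (hgood : ¬ F.BadAt R k x0) :
    ∃ i : Fin (l k + 1), Metric.diam (F.f k '' T) = |F.ρ k i| * Metric.diam T ∧
      Metric.diam (G.f k '' T') = |G.ρ k i| * Metric.diam T' := by
  obtain ⟨i, hi⟩ := exists_cut (F.b k) (F.hb k) x0
  have hgood' : ∀ j, R < |x0 - F.b k j| := by
    intro j
    by_contra h
    exact hgood ⟨j, not_lt.1 h⟩
  have hlo : ∀ j : Fin (l k), (j : ℕ) < i → F.b k j + R < x0 := by
    intro j hj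
    have h1 := (hi j).1 hj
    have h2 := hgood' j
    rw [abs_of_nonneg (by linarith)] at h2
    linarith
  have hhi : ∀ j : Fin (l k), (i : ℕ) ≤ j → x0 + R < F.b k j := by
    intro j hj
    have h1 := (hi j).2 hj
    have h2 := hgood' j
    rw [abs_of_nonpos (by linarith)] at h2
    linarith
  refine ⟨i, diam_affine _ (F.t k i) _ _ (fun x hx => ?_), diam_affine _ (G.t k i) _ _ (fun x hx => ?_)⟩
  · have h1 := abs_le.1 (hT x hx)
    have hR : 0 ≤ R := by linarith [h1.1, h1.2]
    exact F.haff k i x (fun j hj => by linarith [hlo j hj, h1.1])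
      (fun j hj => by linarith [hhi j hj, h1.2])
  · have h1 := abs_le.1 (hT' x hx)
    have hR : 0 ≤ R := by linarith [h1.1, h1.2]
    exact G.haff k i x (fun j hj => by linarith [hlo j hj, h1.1, (abs_lt.1 (hb j)).1])
      (fun j hj => by linarith [hhi j hj, h1.2, (abs_lt.1 (hb j)).2])

lemma slope_ratio (a b δ : ℝ) (ha : a ≠ 0) (hb : b ≠ 0)
    (h : abs (Real.log |a| - Real.log |b|) < δ) : |a| ≤ Real.exp δ * |b| := by
  have h1 := (abs_lt.1 h).2
  have ha' := abs_pos.2 ha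
  have hb' := abs_pos.2 hb
  rw [← Real.log_le_log_iff ha' (by positivity), Real.log_mul (Real.exp_pos _).ne' hb'.ne',
    Real.log_exp]
  linarith

lemma cancel_step {p q p' q' a a' c E : ℝ} (hp : 0 < p) (hc : 0 ≤ c) (hq : 0 ≤ q) (ha : 0 ≤ a)
    (h1 : p' * a ≤ a' * E * p) (h2 : q' * p ≤ c * (p' * q)) :
    q' * a ≤ a' * (c * E) * q := by
  refine le_of_mul_le_mul_right ?_ hp
  calc q' * a * p = (q' * p) * a := by ring
    _ ≤ (c * (p' * q)) * a := mul_le_mul_of_nonneg_right h2 ha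
    _ = (c * q) * (p' * a) := by ring
    _ ≤ (c * q) * (a' * E * p) := mul_le_mul_of_nonneg_left h1 (by positivity)
    _ = a' * (c * E) * q * p := by ring

lemma ratio (F G : CPLIFS m l) (A R δ : ℝ) (n0 : ℕ) (x0 : ℝ) (hA : 1 ≤ A) (hδ : 0 ≤ δ)
    (hF : ∀ k (T : Set ℝ), T.OrdConnected →
      Bornology.IsBounded T → Metric.diam T ≤ A * Metric.diam (F.f k '' T))
    (hG : ∀ k (T : Set ℝ), T.OrdConnected →
      Bornology.IsBounded T → Metric.diam T ≤ A * Metric.diam (G.f k '' T))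
    (hρ : ∀ k i, abs (Real.log |F.ρ k i| - Real.log |G.ρ k i|) < δ)
    (hb : ∀ k j, |F.b k j - G.b k j| < R / 3)
    (hT : ∀ w : List (Fin m), n0 ≤ w.length → ∀ x ∈ F.cyl w, |x - compFam F.f w x0| ≤ R / 3)
    (hT' : ∀ w : List (Fin m), n0 ≤ w.length → ∀ x ∈ G.cyl w, |x - compFam F.f w x0| ≤ R / 3)
    (w : List (Fin m)) :
    Metric.diam (G.cyl w) * Metric.diam (F.cyl []) ≤ Metric.diam (G.cyl []) *
      (A ^ (min w.length n0 + F.cnt R x0 w) * Real.exp (δ * w.length)) * Metric.diam (F.cyl w) ∧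
    Metric.diam (F.cyl w) * Metric.diam (G.cyl []) ≤ Metric.diam (F.cyl []) *
      (A ^ (min w.length n0 + F.cnt R x0 w) * Real.exp (δ * w.length)) * Metric.diam (G.cyl w) := by
  induction w with
  | nil => simp [cnt]
  | cons k w ih =>
    set D := Metric.diam (F.cyl w) with hD
    set D' := Metric.diam (G.cyl w) with hD'
    set Q := Metric.diam (F.cyl (k :: w)) with hQ
    set Q' := Metric.diam (G.cyl (k :: w)) with hQ'
    have pD : 0 < D := F.cyl_pos w
    have pD' : 0 < D' := G.cyl_pos w
    have pQ : 0 < Q := F.cyl_pos _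
    have pQ' : 0 < Q' := G.cyl_pos _
    have p0 := F.nil_pos
    have p0' := G.nil_pos
    obtain ⟨c, hc0, hcE, s1, s2⟩ : ∃ c : ℝ, 0 ≤ c ∧
        c * (A ^ (min w.length n0 + F.cnt R x0 w) * Real.exp (δ * w.length)) ≤
          A ^ (min (k :: w).length n0 + F.cnt R x0 (k :: w)) * Real.exp (δ * (k :: w).length) ∧
        Q' * D ≤ c * (D' * Q) ∧ Q * D' ≤ c * (D * Q') := by
      have hexp : Real.exp (δ * (k :: w).length) = Real.exp δ * Real.exp (δ * w.length) := by
        rw [← Real.exp_add]; congr 1; push_cast [List.length_cons]; ring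
      have hexp1 : 1 ≤ Real.exp δ := Real.one_le_exp hδ
      have hexp0 : 0 < Real.exp (δ * w.length) := Real.exp_pos _
      rw [hexp]
      by_cases hgood : n0 ≤ w.length ∧ ¬ F.BadAt R k (compFam F.f w x0)
      · obtain ⟨hn, hg⟩ := hgood
        obtain ⟨i, e1, e2⟩ := F.step_good G R k (compFam F.f w x0) (F.cyl w) (G.cyl w) (hb k)
          (hT w hn) (hT' w hn) hg
        rw [← cyl_cons, ← hQ, ← hD] at e1
        rw [← cyl_cons, ← hQ', ← hD'] at e2
        refine ⟨Real.exp δ, by positivity, ?_, ?_, ?_⟩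
        · rw [cnt, if_neg hg, List.length_cons, min_eq_right hn, min_eq_right (by omega), add_zero]
          exact le_of_eq (by ring)
        · rw [e1, e2]
          have h1 := slope_ratio _ _ δ (G.hρ0 k i) (F.hρ0 k i) (by rw [abs_sub_comm]; exact hρ k i)
          calc |G.ρ k i| * D' * D = |G.ρ k i| * (D' * D) := by ring
            _ ≤ Real.exp δ * |F.ρ k i| * (D' * D) := mul_le_mul_of_nonneg_right h1 (by positivity)
            _ = _ := by ring
        · rw [e1, e2]
          have h1 := slope_ratio _ _ δ (F.hρ0 k i) (G.hρ0 k i) (hρ k i)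
          calc |F.ρ k i| * D * D' = |F.ρ k i| * (D' * D) := by ring
            _ ≤ Real.exp δ * |G.ρ k i| * (D' * D) := mul_le_mul_of_nonneg_right h1 (by positivity)
            _ = _ := by ring
      · have hexpo : min w.length n0 + F.cnt R x0 w + 1 ≤
            min (k :: w).length n0 + F.cnt R x0 (k :: w) := by
          rw [cnt, List.length_cons]
          by_cases hn : n0 ≤ w.length
          · have : F.BadAt R k (compFam F.f w x0) := by
              by_contra h; exact hgood ⟨hn, h⟩
            rw [if_pos this]; omega
          · split_ifs <;> omega
        have u1 : Q ≤ D := by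
          have := F.diam_up 1 zero_le_one (fun k i => (F.hρ1 k i).le) k _ (F.cyl_good w).2
          rwa [← cyl_cons, one_mul] at this
        have u2 : Q' ≤ D' := by
          have := G.diam_up 1 zero_le_one (fun k i => (G.hρ1 k i).le) k _ (G.cyl_good w).2
          rwa [← cyl_cons, one_mul] at this
        have l1 : D ≤ A * Q := by
          have := hF k _ (F.cyl_good w).1 (F.cyl_good w).2
          rwa [← cyl_cons] at this
        have l2 : D' ≤ A * Q' := by
          have := hG k _ (G.cyl_good w).1 (G.cyl_good w).2
          rwa [← cyl_cons] at this
        refine ⟨A, by linarith, ?_, ?_, ?_⟩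
        · calc A * (A ^ (min w.length n0 + F.cnt R x0 w) * Real.exp (δ * w.length))
              = A ^ (min w.length n0 + F.cnt R x0 w + 1) * (1 * Real.exp (δ * w.length)) := by
                rw [pow_succ]; ring
            _ ≤ _ := by
                apply mul_le_mul (pow_le_pow_right₀ hA hexpo) _ (by positivity) (by positivity)
                exact mul_le_mul_of_nonneg_right hexp1 hexp0.le
        · calc Q' * D ≤ D' * (A * Q) := mul_le_mul u2 l1 pD.le pD'.le
            _ = _ := by ring
        · calc Q * D' ≤ D * (A * Q') := mul_le_mul u1 l2 pD'.le pD.le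
            _ = _ := by ring
    refine ⟨(cancel_step pD hc0 pQ.le p0.le ih.1 s1).trans ?_,
      (cancel_step pD' hc0 pQ'.le p0'.le ih.2 s2).trans ?_⟩
    · exact mul_le_mul_of_nonneg_right (mul_le_mul_of_nonneg_left hcE p0'.le) pQ.le
    · exact mul_le_mul_of_nonneg_right (mul_le_mul_of_nonneg_left hcE p0.le) pQ'.le

lemma compare (F : CPLIFS m l) (hno : NoExactOverlap F.S) (η : ℝ) (hη : 0 < η) :
    ∃ δ > (0:ℝ), ∀ G : CPLIFS m l, Close δ F G → ∃ C > (0:ℝ), ∀ w : List (Fin m),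
      Metric.diam (G.cyl w) ≤ C * Real.exp (η * w.length) * Metric.diam (F.cyl w) ∧
      Metric.diam (F.cyl w) ≤ C * Real.exp (η * w.length) * Metric.diam (G.cyl w) := by
  obtain ⟨r, hr0, hr1, hr⟩ := F.exists_rate
  obtain ⟨c, hc, hlow⟩ := F.exists_low
  have h1r : 0 < 1 - r := by linarith
  obtain ⟨A, hA, hAF⟩ := F.exists_A (c * Real.exp (-1)) (by positivity)
  set B := Fintype.card (Σ k : Fin m, Fin (l k)) with hB
  have hlogA : 0 ≤ Real.log A := Real.log_nonneg hA
  obtain ⟨N0, hN0⟩ := exists_nat_gt (B * Real.log A / (η / 2))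
  set N := N0 + 1 with hN
  have hNη : B * Real.log A ≤ η / 2 * N := by
    rw [div_lt_iff₀ (by positivity)] at hN0
    rw [hN]; push_cast; nlinarith
  obtain ⟨R, hR0, hR⟩ := F.exists_R hno N
  obtain ⟨δ1, hδ1, hbr⟩ := F.break_close (R / 3) (by positivity)
  refine ⟨min (min δ1 (η / 2)) (min 1 (R / 6 * (1 - r))), by positivity, fun G hG => ?_⟩
  set δ := min (min δ1 (η / 2)) (min 1 (R / 6 * (1 - r))) with hδ
  have d0 : 0 < δ := by positivity
  have d1 : δ ≤ δ1 := (min_le_left _ _).trans (min_le_left _ _)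
  have d2 : δ ≤ η / 2 := (min_le_left _ _).trans (min_le_right _ _)
  have d3 : δ ≤ 1 := (min_le_right _ _).trans (min_le_left _ _)
  have d4 : δ ≤ R / 6 * (1 - r) := (min_le_right _ _).trans (min_le_right _ _)
  obtain ⟨_, hρ, hf⟩ := hG
  have hbG := hbr G (fun k x => (hf k x).trans_le d1)
  have hlowF : ∀ k i, c * Real.exp (-1) ≤ |F.ρ k i| := by
    intro k i
    have : Real.exp (-1) ≤ 1 := Real.exp_le_one_iff.2 (by norm_num)
    nlinarith [hlow k i]
  have hlowG : ∀ k i, c * Real.exp (-1) ≤ |G.ρ k i| := by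
    intro k i
    have h1 := slope_ratio _ _ 1 (F.hρ0 k i) (G.hρ0 k i) ((hρ k i).trans_le d3)
    have h2 := (hlow k i).trans h1
    calc c * Real.exp (-1) ≤ (Real.exp 1 * |G.ρ k i|) * Real.exp (-1) :=
          mul_le_mul_of_nonneg_right h2 (Real.exp_pos _).le
      _ = (Real.exp 1 * Real.exp (-1)) * |G.ρ k i| := by ring
      _ = |G.ρ k i| := by rw [← Real.exp_add]; simp
  obtain ⟨hoF, hbF, x0, hx0, _⟩ := F.supp_good
  obtain ⟨hoG, hbG', _⟩ := G.supp_good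
  obtain ⟨M, hM0, hM⟩ : ∃ M > (0:ℝ), (∀ x ∈ suppInt F.f, |x0 - x| ≤ M) ∧
      ∀ x ∈ suppInt G.f, |x0 - x| ≤ M := by
    obtain ⟨M, hM⟩ := (hbF.union hbG').subset_closedBall x0
    have hh : ∀ x ∈ suppInt F.f ∪ suppInt G.f, |x0 - x| ≤ max M 1 := by
      intro x hx
      have := Metric.mem_closedBall.1 (hM hx)
      rw [dist_comm, Real.dist_eq] at this
      exact this.trans (le_max_left _ _)
    exact ⟨max M 1, lt_max_of_lt_right one_pos, fun x hx => hh x (Or.inl hx),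
      fun x hx => hh x (Or.inr hx)⟩
  obtain ⟨n0, hn0⟩ := exists_pow_lt_of_lt_one (show 0 < R / 6 / M by positivity) hr1
  have hpow : ∀ n, n0 ≤ n → ∀ t, t ≤ M → r ^ n * t ≤ R / 6 := by
    intro n hn t ht
    have h1 : r ^ n ≤ r ^ n0 := pow_le_pow_of_le_one hr0.le hr1.le hn
    have h2 : r ^ n * t ≤ r ^ n * M := mul_le_mul_of_nonneg_left ht (by positivity)
    have h3 : r ^ n * M ≤ R / 6 / M * M :=
      mul_le_mul_of_nonneg_right (h1.trans hn0.le) hM0.le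
    rw [div_mul_cancel₀ _ hM0.ne'] at h3
    linarith
  have hδr : δ / (1 - r) ≤ R / 6 := by rw [div_le_iff₀ h1r]; exact d4
  have hrat := F.ratio G A R δ n0 x0 hA d0.le (hAF F hlowF) (hAF G hlowG) hρ hbG
    (by
      rintro w hw _ ⟨x, hx, rfl⟩
      have h1 := F.comp_lip r hr0.le hr w x0 x
      have h2 := hpow w.length hw _ (hM.1 x hx)
      rw [abs_sub_comm]
      linarith)
    (by
      rintro w hw _ ⟨x, hx, rfl⟩
      have h1 := F.comp_near G r hr0.le hr1 hr δ hf d0.le w x0 x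
      have h2 := hpow w.length hw _ (hM.2 x hx)
      rw [abs_sub_comm]
      linarith)
  have p0 := F.nil_pos
  have p0' := G.nil_pos
  set a := Metric.diam (F.cyl [])
  set a' := Metric.diam (G.cyl [])
  have hE : ∀ w : List (Fin m), A ^ (min w.length n0 + F.cnt R x0 w) * Real.exp (δ * w.length) ≤
      A ^ (n0 + B) * Real.exp (η * w.length) := by
    intro w
    have h1 := F.cnt_total N (by omega) R hR w.length w rfl x0
    rw [← hB] at h1
    have h2 : min w.length n0 + F.cnt R x0 w ≤ (n0 + B) + B * (w.length / N) := by
      have := min_le_right w.length n0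
      rw [Nat.mul_add, mul_one] at h1
      omega
    have h3 : A ^ (B * (w.length / N)) ≤ Real.exp (η / 2 * w.length) := by
      rw [← Real.log_le_iff_le_exp (by positivity), Real.log_pow]
      have h4 : ((w.length / N : ℕ) : ℝ) * N ≤ w.length := by
        exact_mod_cast Nat.div_mul_le_self w.length N
      push_cast
      have h5 := mul_le_mul_of_nonneg_left hNη (Nat.cast_nonneg (α := ℝ) (w.length / N))
      nlinarith
    calc A ^ (min w.length n0 + F.cnt R x0 w) * Real.exp (δ * w.length)
        ≤ (A ^ (n0 + B) * A ^ (B * (w.length / N))) * Real.exp (η / 2 * w.length) := by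
          rw [← pow_add]
          refine mul_le_mul (pow_le_pow_right₀ hA h2) ?_ (by positivity) (by positivity)
          exact Real.exp_le_exp.2 (mul_le_mul_of_nonneg_right d2 (Nat.cast_nonneg _))
      _ ≤ (A ^ (n0 + B) * Real.exp (η / 2 * w.length)) * Real.exp (η / 2 * w.length) := by
          gcongr
      _ = A ^ (n0 + B) * Real.exp (η * w.length) := by
          rw [mul_assoc, ← Real.exp_add]; congr 2; ring
  have hApos : 0 < A := by linarith
  have hgen : ∀ u v E E' X Y : ℝ, 0 < u → 0 < v → E ≤ E' → 0 ≤ E' → 0 ≤ X → X * u ≤ v * E * Y →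
      0 ≤ Y → X ≤ v / u * E' * Y := by
    intro u v E E' X Y hu hv hE hE' hX h hY
    have h1 : v * E * Y ≤ v * E' * Y :=
      mul_le_mul_of_nonneg_right (mul_le_mul_of_nonneg_left hE hv.le) hY
    have h2 : v / u * E' * Y = v * E' * Y / u := by ring
    rw [h2, le_div_iff₀ hu]
    linarith
  refine ⟨(a / a' + a' / a) * A ^ (n0 + B), by positivity, fun w => ?_⟩
  have q1 := (F.cyl_pos w).le
  have q2 := (G.cyl_pos w).le
  constructor
  · refine (hgen a a' _ _ _ _ p0 p0' (hE w) (by positivity) q2 (hrat w).1 q1).trans ?_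
    refine mul_le_mul_of_nonneg_right ?_ q1
    rw [mul_assoc]
    refine mul_le_mul_of_nonneg_right ?_ (by positivity)
    have : 0 < a / a' := by positivity
    linarith
  · refine (hgen a' a _ _ _ _ p0' p0 (hE w) (by positivity) q1 (hrat w).2 q2).trans ?_
    refine mul_le_mul_of_nonneg_right ?_ q2
    rw [mul_assoc]
    refine mul_le_mul_of_nonneg_right ?_ (by positivity)
    have : 0 < a' / a := by positivity
    linarith

end CPLIFS

namespace CPLIFS

variable {m : ℕ} {l : Fin m → ℕ}

/-- the sequence in the pressure -/
def pseq (F : CPLIFS m l) (s : ℝ) (n : ℕ) : ℝ :=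
  (n : ℝ)⁻¹ * Real.log (∑ w : Fin n → Fin m, Metric.diam (F.cyl (List.ofFn w)) ^ s)

lemma pressure_eq (F : CPLIFS m l) (s : ℝ) : pressure F.f s = limsup (F.pseq s) atTop := rfl

lemma sum_pos' (F : CPLIFS m l) (s : ℝ) (n : ℕ) :
    0 < ∑ w : Fin n → Fin m, Metric.diam (F.cyl (List.ofFn w)) ^ s := by
  have hm := F.hm
  have : Nonempty (Fin m) := ⟨⟨0, by omega⟩⟩
  exact Finset.sum_pos (fun w _ => Real.rpow_pos_of_pos (F.cyl_pos _) s) Finset.univ_nonempty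

lemma log_upper (F : CPLIFS m l) (w : List (Fin m)) (r : ℝ) (hr0 : 0 < r)
    (hr : ∀ k i, |F.ρ k i| ≤ r) :
    Real.log (Metric.diam (F.cyl w)) ≤ w.length * Real.log r + Real.log (Metric.diam (F.cyl [])) := by
  have h := Real.log_le_log (F.cyl_pos w) (F.cyl_up r hr0.le hr w)
  rwa [Real.log_mul (by positivity) F.nil_pos.ne', Real.log_pow] at h

lemma pseq_bdd (F : CPLIFS m l) (s : ℝ) (hs : 0 ≤ s) : ∃ K : ℝ, ∀ n, |F.pseq s n| ≤ K := by
  obtain ⟨c, hc, hlow⟩ := F.exists_low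
  obtain ⟨A, hA, hAF⟩ := F.exists_A c hc
  have hm := F.hm
  have hne : Nonempty (Fin m) := ⟨⟨0, by omega⟩⟩
  have p0 := F.nil_pos
  set a := Metric.diam (F.cyl []) with ha
  have hlm : 0 ≤ Real.log m := Real.log_natCast_nonneg m
  have hlA : 0 ≤ Real.log A := Real.log_nonneg hA
  refine ⟨Real.log m + s * |Real.log a| + s * Real.log A, fun n => ?_⟩
  rcases Nat.eq_zero_or_pos n with rfl | hn
  · simp only [pseq, Nat.cast_zero, inv_zero, zero_mul, abs_zero]
    positivity
  have hn' : (1:ℝ) ≤ n := by exact_mod_cast hn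
  have hsum := F.sum_pos' s n
  have up : Real.log (∑ w : Fin n → Fin m, Metric.diam (F.cyl (List.ofFn w)) ^ s) ≤
      n * Real.log m + s * Real.log a := by
    have h1 : ∑ w : Fin n → Fin m, Metric.diam (F.cyl (List.ofFn w)) ^ s ≤ (m:ℝ) ^ n * a ^ s := by
      calc _ ≤ ∑ w : Fin n → Fin m, a ^ s := by
            refine Finset.sum_le_sum (fun w _ => Real.rpow_le_rpow Metric.diam_nonneg ?_ hs)
            have := F.cyl_up 1 zero_le_one (fun k i => (F.hρ1 k i).le) (List.ofFn w)
            rwa [one_pow, one_mul] at this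
        _ = _ := by simp
    have hm0 : (0:ℝ) < m := by exact_mod_cast (by omega : 0 < m)
    have := Real.log_le_log hsum h1
    rwa [Real.log_mul (by positivity) (by positivity), Real.log_pow, Real.log_rpow p0] at this
  have lo : s * (Real.log a - n * Real.log A) ≤
      Real.log (∑ w : Fin n → Fin m, Metric.diam (F.cyl (List.ofFn w)) ^ s) := by
    let w0 : Fin n → Fin m := fun _ => hne.some
    have h1 : Metric.diam (F.cyl (List.ofFn w0)) ^ s ≤
        ∑ w : Fin n → Fin m, Metric.diam (F.cyl (List.ofFn w)) ^ s :=
      Finset.single_le_sum (f := fun w : Fin n → Fin m => Metric.diam (F.cyl (List.ofFn w)) ^ s)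
        (fun w _ => (Real.rpow_pos_of_pos (F.cyl_pos _) s).le) (Finset.mem_univ w0)
    have h2 := Real.log_le_log (Real.rpow_pos_of_pos (F.cyl_pos _) s) h1
    rw [Real.log_rpow (F.cyl_pos _)] at h2
    have h3 := Real.log_le_log p0 (F.cyl_low A (by linarith) (hAF F hlow) (List.ofFn w0))
    rw [Real.log_mul (by positivity) (F.cyl_pos _).ne', Real.log_pow, List.length_ofFn] at h3
    refine le_trans (mul_le_mul_of_nonneg_left ?_ hs) h2
    linarith
  have e1 := mul_le_mul_of_nonneg_left (le_abs_self (Real.log a)) hs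
  have e2 := mul_le_mul_of_nonneg_left (neg_abs_le (Real.log a)) hs
  have e3 : 0 ≤ s * |Real.log a| := by positivity
  have e4 : 0 ≤ s * Real.log A := by positivity
  have e5 : s * |Real.log a| ≤ n * (s * |Real.log a|) := le_mul_of_one_le_left e3 hn'
  have e6 : 0 ≤ n * (s * Real.log A) := by positivity
  have e7 : 0 ≤ n * Real.log m := by positivity
  unfold pseq
  rw [abs_mul, abs_of_nonneg (by positivity : (0:ℝ) ≤ (n:ℝ)⁻¹), inv_mul_le_iff₀ (by linarith), abs_le]
  constructor <;> nlinarith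

lemma pressure_le (F G : CPLIFS m l) (s t c0 c1 : ℝ) (hs : 0 ≤ s) (ht : 0 ≤ t)
    (h : ∀ w : List (Fin m), t * Real.log (Metric.diam (G.cyl w)) ≤
      c0 + c1 * w.length + s * Real.log (Metric.diam (F.cyl w))) :
    pressure G.f t ≤ pressure F.f s + c1 := by
  rw [pressure_eq, pressure_eq]
  obtain ⟨K, hK⟩ := F.pseq_bdd s hs
  obtain ⟨K', hK'⟩ := G.pseq_bdd t ht
  have hterm : ∀ n : ℕ, 0 < n → G.pseq t n ≤ F.pseq s n + c1 + c0 / n := by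
    intro n hn
    have hn' : (0:ℝ) < n := by exact_mod_cast hn
    have h1 : ∑ w : Fin n → Fin m, Metric.diam (G.cyl (List.ofFn w)) ^ t ≤
        Real.exp (c0 + c1 * n) * ∑ w : Fin n → Fin m, Metric.diam (F.cyl (List.ofFn w)) ^ s := by
      rw [Finset.mul_sum]
      refine Finset.sum_le_sum (fun w _ => ?_)
      rw [Real.rpow_def_of_pos (G.cyl_pos _), Real.rpow_def_of_pos (F.cyl_pos _), ← Real.exp_add]
      refine Real.exp_le_exp.2 ?_
      have := h (List.ofFn w)
      rw [List.length_ofFn] at this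
      linarith
    have h2 := Real.log_le_log (G.sum_pos' t n) h1
    rw [Real.log_mul (Real.exp_pos _).ne' (F.sum_pos' s n).ne', Real.log_exp] at h2
    have h3 := mul_le_mul_of_nonneg_left h2 (inv_pos.2 hn').le
    unfold pseq
    refine h3.trans (le_of_eq ?_)
    field_simp
    ring
  refine le_of_forall_pos_le_add (fun ε hε => ?_)
  have hev1 : ∀ᶠ n in atTop, F.pseq s n < limsup (F.pseq s) atTop + ε / 2 := by
    refine eventually_lt_of_limsup_lt (by linarith) ?_
    exact isBoundedUnder_of ⟨K, fun n => (abs_le.1 (hK n)).2⟩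
  have hev2 : ∀ᶠ n : ℕ in atTop, c0 / n < ε / 2 :=
    (tendsto_const_div_atTop_nhds_zero_nat c0).eventually_lt_const (by linarith)
  refine limsup_le_of_le ?_ ?_
  · exact (isBoundedUnder_of ⟨-K', fun n => (abs_le.1 (hK' n)).1⟩ :
      IsBoundedUnder (· ≥ ·) atTop (G.pseq t)).isCoboundedUnder_le
  · filter_upwards [hev1, hev2, eventually_gt_atTop 0] with n h1 h2 h3
    linarith [hterm n h3]

end CPLIFS

/-- **Theorem pm78.** Let `F` be a CPLIFS whose generated self-similar IFS has
no exact overlapping.  Then for every `ε > 0` there exists `δ > 0` such that every CPLIFS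
`G` that is δ-close to `F` satisfies `|s_F - s_G| < ε`, where `s_F, s_G` are the natural
dimensions (the unique nonnegative zeros of the natural pressure functions). -/
theorem natural_dimension_continuous_of_noExactOverlap
    {m : ℕ} {l : Fin m → ℕ} (F : CPLIFS m l)
    (hno : NoExactOverlap F.S)
    (sF : ℝ) (hsF0 : 0 ≤ sF) (hsF : pressure F.f sF = 0)
    (ε : ℝ) (hε : 0 < ε) :
    ∃ δ > (0 : ℝ), ∀ G : CPLIFS m l, CPLIFS.Close δ F G →
      ∀ sG : ℝ, 0 ≤ sG → pressure G.f sG = 0 → |sF - sG| < ε := by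
  obtain ⟨r, hr0, hr1, hr⟩ := F.exists_rate
  have hL : Real.log r < 0 := Real.log_neg hr0 hr1
  set L := -Real.log r with hLdef
  have hL0 : 0 < L := by linarith
  set η := min (L / 2) (ε * L / (4 * (sF + 1))) with hη
  have hη0 : 0 < η := by positivity
  have hη1 : η ≤ L / 2 := min_le_left _ _
  have hη2 : η * (4 * (sF + 1)) ≤ ε * L := by
    rw [← le_div_iff₀ (by positivity)]
    exact min_le_right _ _
  obtain ⟨δ, hδ, hcmp⟩ := F.compare hno η hη0
  refine ⟨δ, hδ, fun G hG sG hsG0 hsG => ?_⟩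
  obtain ⟨C, hC, hw⟩ := hcmp G hG
  set a := Real.log (Metric.diam (F.cyl [])) with ha
  have hGF : ∀ w, Real.log (Metric.diam (G.cyl w)) ≤
      Real.log C + η * w.length + Real.log (Metric.diam (F.cyl w)) := by
    intro w
    have := Real.log_le_log (G.cyl_pos w) (hw w).1
    rwa [Real.log_mul (by positivity) (F.cyl_pos w).ne', Real.log_mul hC.ne' (Real.exp_pos _).ne',
      Real.log_exp] at this
  have hFG : ∀ w, Real.log (Metric.diam (F.cyl w)) ≤
      Real.log C + η * w.length + Real.log (Metric.diam (G.cyl w)) := by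
    intro w
    have := Real.log_le_log (F.cyl_pos w) (hw w).2
    rwa [Real.log_mul (by positivity) (G.cyl_pos w).ne', Real.log_mul hC.ne' (Real.exp_pos _).ne',
      Real.log_exp] at this
  have hup : ∀ w, Real.log (Metric.diam (F.cyl w)) ≤ w.length * Real.log r + a :=
    fun w => F.log_upper w r hr0 hr
  have key : |sF - sG| * L ≤ η * sG := by
    rcases le_total sF sG with h | h
    · have hp := F.pressure_le G sF sG (sG * Real.log C + (sG - sF) * a)
        (η * sG + (sG - sF) * Real.log r) hsF0 hsG0 (fun w => by
          have h1 := mul_le_mul_of_nonneg_left (hGF w) hsG0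
          have h2 := mul_le_mul_of_nonneg_left (hup w) (sub_nonneg.2 h)
          linarith)
      rw [hsF, hsG] at hp
      rw [abs_of_nonpos (by linarith), hLdef]
      linarith
    · have hp := G.pressure_le F sG sF (sG * Real.log C + (sF - sG) * a)
        (η * sG + (sF - sG) * Real.log r) hsG0 hsF0 (fun w => by
          have h1 := mul_le_mul_of_nonneg_left (hFG w) hsG0
          have h2 := mul_le_mul_of_nonneg_left (hup w) (sub_nonneg.2 h)
          linarith)
      rw [hsF, hsG] at hp
      rw [abs_of_nonneg (by linarith), hLdef]
      linarith
  set d := |sF - sG| with hd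
  have hd0 : 0 ≤ d := abs_nonneg _
  have hsGd : sG ≤ sF + d := by
    have := neg_abs_le (sF - sG)
    linarith
  have h1 : η * sG ≤ η * sF + η * d := by nlinarith
  have h2 : η * d ≤ L / 2 * d := mul_le_mul_of_nonneg_right hη1 hd0
  have h3 : d * (L / 2) ≤ η * sF := by linarith
  have h4 : d * L < ε * L := by nlinarith
  exact lt_of_mul_lt_mul_right h4 hL0.le

end
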